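/- arXiv:1805.07430 — 4 statements merged into one kernel-verified Lean document; each statement's English description precedes it below -/
import Mathlib

section
/- Let u' ∈ Δ_N, let T ≥ 2, and set u = (1 − 1/T)·u' + (1/(NT))·1, which lies in Δ̄_N. If r_1, …, r_T ∈ ℝ^N have nonnegative entries and ⟨u', r_t⟩ > 0 for all t, then Σ_{t=1}^T f_t(u) − Σ_{t=1}^T f_t(u') ≤ 2, i.e., Σ_{t=1}^T ( ln⟨u', r_t⟩ − ln⟨u, r_t⟩ ) ≤ 2. -/
/-! Mixing `x` with any nonnegative vector keeps at least a fraction `1 - ε` of each coordinate,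
hence of each return `⟨x, r⟩`, so the logarithmic loss of a round grows by at most
`-log (1 - ε) ≤ ε / (1 - ε)`. For `ε = 1 / T` with `2 ≤ T` this is at most `2 / T`, whatever the
returns are. -/

open Finset

theorem log_sub_log_le_div_one_sub {ε x y : ℝ} (hε : ε < 1) (hx : 0 < x)
    (hxy : (1 - ε) * x ≤ y) : Real.log x - Real.log y ≤ ε / (1 - ε) := by
  have hc : 0 < 1 - ε := sub_pos.2 hε
  have hlog : Real.log (1 - ε) + Real.log x ≤ Real.log y :=
    Real.log_mul hc.ne' hx.ne' ▸ Real.log_le_log (mul_pos hc hx) hxy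
  calc Real.log x - Real.log y ≤ -Real.log (1 - ε) := by linarith
    _ ≤ (1 - ε)⁻¹ - 1 := by linarith [Real.one_sub_inv_le_log_of_pos hc]
    _ = ε / (1 - ε) := by rw [inv_eq_one_div, div_sub_one hc.ne', sub_sub_cancel]

section Simplex

variable {ι κ : Type*} [Fintype ι]

theorem sum_log_dotProduct_sub_log_dotProduct_le {ε : ℝ} {x y : ι → ℝ} {s : Finset κ}
    {r : κ → ι → ℝ} (hε : ε < 1) (hxy : (1 - ε) • x ≤ y) (hr : ∀ t ∈ s, 0 ≤ r t)
    (hpos : ∀ t ∈ s, 0 < x ⬝ᵥ r t) :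
    ∑ t ∈ s, (Real.log (x ⬝ᵥ r t) - Real.log (y ⬝ᵥ r t)) ≤ #s * (ε / (1 - ε)) := by
  rw [← nsmul_eq_mul]
  refine sum_le_card_nsmul s _ _ fun t ht => log_sub_log_le_div_one_sub hε (hpos t ht) ?_
  calc (1 - ε) * (x ⬝ᵥ r t) = ((1 - ε) • x) ⬝ᵥ r t := by rw [smul_dotProduct, smul_eq_mul]
    _ ≤ y ⬝ᵥ r t := dotProduct_le_dotProduct_of_nonneg_right hxy (hr t ht)

/-- The points of the simplex all of whose coordinates are at least `δ`; the set `Δ̄_N` is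
`truncatedSimplex (Fin N) (1 / (N * T))`. -/
def truncatedSimplex (ι : Type*) [Fintype ι] (δ : ℝ) : Set (ι → ℝ) :=
  {x ∈ stdSimplex ℝ ι | ∀ i, δ ≤ x i}

/-- The mixture of `x` with the uniform distribution on `ι`, which gets weight `ε`; the smoothed
vector `u` is `uniformMix (1 / T) u'`. -/
noncomputable def uniformMix (ε : ℝ) (x : ι → ℝ) : ι → ℝ :=
  fun i => (1 - ε) * x i + ε / Fintype.card ι

theorem one_sub_smul_le_uniformMix {ε : ℝ} (hε : 0 ≤ ε) (x : ι → ℝ) :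
    (1 - ε) • x ≤ uniformMix ε x :=
  fun _ => le_add_of_nonneg_right (div_nonneg hε (Nat.cast_nonneg _))

theorem sum_uniformMix {x : ι → ℝ} (ε : ℝ) (hx : ∑ i, x i = 1) :
    ∑ i, uniformMix ε x i = 1 := by
  obtain ⟨i, -, -⟩ := exists_ne_zero_of_sum_ne_zero (hx ▸ one_ne_zero)
  have hcard : (Fintype.card ι : ℝ) ≠ 0 :=
    Nat.cast_ne_zero.2 (Fintype.card_pos_iff.2 ⟨i⟩).ne'
  calc ∑ i, uniformMix ε x i
      = (1 - ε) * ∑ i, x i + Fintype.card ι * (ε / Fintype.card ι) := by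
        simp only [uniformMix, sum_add_distrib, mul_sum, sum_const, card_univ, nsmul_eq_mul]
    _ = 1 := by rw [hx, mul_div_cancel₀ _ hcard, mul_one, sub_add_cancel]

theorem uniformMix_mem_truncatedSimplex {ε : ℝ} {x : ι → ℝ} (hε₀ : 0 ≤ ε) (hε₁ : ε ≤ 1)
    (hx : x ∈ stdSimplex ℝ ι) :
    uniformMix ε x ∈ truncatedSimplex ι (ε / Fintype.card ι) := by
  have hfloor : ∀ i, ε / Fintype.card ι ≤ uniformMix ε x i := fun i =>
    le_add_of_nonneg_left (mul_nonneg (sub_nonneg.2 hε₁) (hx.1 i))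
  have hnonneg : ∀ i, 0 ≤ uniformMix ε x i := fun i =>
    (div_nonneg hε₀ (Nat.cast_nonneg _)).trans (hfloor i)
  exact ⟨⟨hnonneg, sum_uniformMix ε hx.2⟩, hfloor⟩

theorem smoothing_loss_general {T : ℝ} (hT : 2 ≤ T) {x : ι → ℝ} (hx : x ∈ stdSimplex ℝ ι)
    {s : Finset κ} (hs : #s ≤ T) {r : κ → ι → ℝ} (hr : ∀ t ∈ s, 0 ≤ r t)
    (hpos : ∀ t ∈ s, 0 < x ⬝ᵥ r t) :
    uniformMix (1 / T) x ∈ truncatedSimplex ι (1 / T / Fintype.card ι) ∧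
      ∑ t ∈ s, (Real.log (x ⬝ᵥ r t) - Real.log (uniformMix (1 / T) x ⬝ᵥ r t)) ≤ 2 := by
  have hT₀ : 0 < T := by linarith
  have hε₀ : 0 ≤ 1 / T := by positivity
  have hε₁ : 1 / T < 1 := by rw [div_lt_one hT₀]; linarith
  have hround : 1 / T / (1 - 1 / T) ≤ 1 / T * 2 := by
    rw [div_eq_mul_inv (1 / T)]
    exact mul_le_mul_of_nonneg_left (sub_one_div_inv_le_two hT) hε₀
  refine ⟨uniformMix_mem_truncatedSimplex hε₀ hε₁.le hx, ?_⟩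
  calc ∑ t ∈ s, (Real.log (x ⬝ᵥ r t) - Real.log (uniformMix (1 / T) x ⬝ᵥ r t))
      ≤ #s * (1 / T / (1 - 1 / T)) :=
        sum_log_dotProduct_sub_log_dotProduct_le hε₁ (one_sub_smul_le_uniformMix hε₀ x) hr hpos
    _ ≤ T * (1 / T * 2) := mul_le_mul hs hround (div_nonneg hε₀ (sub_nonneg.2 hε₁.le)) hT₀.le
    _ = 2 := by rw [← mul_assoc, mul_one_div_cancel hT₀.ne', one_mul]

end Simplex

/- STATEMENT 8: Lemma 3 of the paper. Smoothing u' ∈ Δ_N into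
   u = (1 - 1/T)·u' + (1/(NT))·1 ∈ Δ̄_N loses at most 2 in total loss. -/

theorem smoothing_loss
    (N T : ℕ) (hN : 2 ≤ N) (hT : N < T)
    (u' : Fin N → ℝ) (hu' : (∀ i, 0 ≤ u' i) ∧ (∑ i, u' i) = 1)
    (r : ℕ → Fin N → ℝ)
    (hr : ∀ t ∈ Finset.Icc 1 T, ∀ i, 0 ≤ r t i)
    (hpos : ∀ t ∈ Finset.Icc 1 T, 0 < ∑ i, u' i * r t i) :
    -- u = (1 - 1/T)·u' + (1/(NT))·1 lies in Δ̄_N ...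
    ((∀ i, 0 ≤ (1 - 1 / (T : ℝ)) * u' i + 1 / ((N : ℝ) * T)) ∧
      (∑ i, ((1 - 1 / (T : ℝ)) * u' i + 1 / ((N : ℝ) * T))) = 1 ∧
      (∀ i, 1 / ((N : ℝ) * T) ≤ (1 - 1 / (T : ℝ)) * u' i + 1 / ((N : ℝ) * T))) ∧
    -- ... and Σ_t (ln⟨u', r_t⟩ - ln⟨u, r_t⟩) ≤ 2
    ∑ t ∈ Finset.Icc 1 T,
        (Real.log (∑ i, u' i * r t i)
          - Real.log (∑ i, ((1 - 1 / (T : ℝ)) * u' i + 1 / ((N : ℝ) * T)) * r t i)) ≤ 2 := by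
  simpa only [truncatedSimplex, stdSimplex, uniformMix, dotProduct, Set.mem_ofPred_eq, and_assoc,
    Fintype.card_fin, div_div, mul_comm (T : ℝ)] using smoothing_loss_general (T := T)
      (by exact_mod_cast hN.trans hT.le) hu' (s := Icc 1 T) (by simp) hr hpos
end

section
/- Let r ∈ ℝ^N have nonnegative coordinates, let x, u ∈ Δ_N with ⟨x, r⟩ > 0 and ⟨u, r⟩ > 0, set g = −r/⟨x, r⟩, and let 0 < β ≤ 1/2. Then 1 − 2β·⟨g, u − x⟩ > 0 and −ln⟨u, r⟩ ≥ −ln⟨x, r⟩ − (1/(2β))·ln(1 − 2β·⟨g, u − x⟩). -/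
/-!
With `t = ⟨u, r⟩ / ⟨x, r⟩` one has `⟨g, u - x⟩ = 1 - t`, so both claims concern the single positive
number `t`. Bernoulli's inequality `t ^ (2 * β) ≤ 1 + 2 * β * (t - 1)` for exponents in `[0, 1]`
yields the positivity of its right-hand side and, after taking logarithms, the lower bound.
-/

section Bernoulli

variable {p s : ℝ}

theorem one_add_mul_pos_of_neg_one_lt (hp0 : 0 ≤ p) (hp1 : p ≤ 1) (hs : -1 < s) :
    0 < 1 + p * s :=
  (Real.rpow_pos_of_pos (by linarith) p).trans_le
    (rpow_one_add_le_one_add_mul_self hs.le hp0 hp1)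

theorem mul_log_one_add_le_log_one_add_mul (hp0 : 0 ≤ p) (hp1 : p ≤ 1) (hs : -1 < s) :
    p * Real.log (1 + s) ≤ Real.log (1 + p * s) := by
  have hpos : 0 < 1 + s := by linarith
  rw [← Real.log_rpow hpos]
  exact Real.log_le_log (Real.rpow_pos_of_pos hpos p)
    (rpow_one_add_le_one_add_mul_self hs.le hp0 hp1)

end Bernoulli

theorem sum_neg_div_mul_sub_eq_one_sub_div {ι K : Type*} [Fintype ι] [Field K] (r x u : ι → K)
    (hxr : ∑ i, x i * r i ≠ 0) :
    ∑ i, (-(r i) / ∑ j, x j * r j) * (u i - x i) =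
      1 - (∑ i, u i * r i) / ∑ i, x i * r i := by
  rw [← div_self hxr, ← sub_div, ← Finset.sum_sub_distrib, Finset.sum_div]
  exact Finset.sum_congr rfl fun i _ ↦ by ring

theorem exp_concavity_general {ι : Type*} [Fintype ι] (r x u : ι → ℝ)
    (hxr : 0 < ∑ i, x i * r i) (hur : 0 < ∑ i, u i * r i)
    (β : ℝ) (hβ0 : 0 < β) (hβ : β ≤ 1 / 2) :
    0 < 1 - 2 * β * ∑ i, (-(r i) / ∑ j, x j * r j) * (u i - x i) ∧
    -Real.log (∑ i, u i * r i)
      ≥ -Real.log (∑ i, x i * r i)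
        - (1 / (2 * β))
            * Real.log (1 - 2 * β * ∑ i, (-(r i) / ∑ j, x j * r j) * (u i - x i)) := by
  rw [sum_neg_div_mul_sub_eq_one_sub_div r x u hxr.ne']
  set a := ∑ i, x i * r i
  set b := ∑ i, u i * r i
  have hp0 : 0 < 2 * β := by positivity
  have hp1 : 2 * β ≤ 1 := by linarith
  have hratio : -1 < b / a - 1 := by linarith [div_pos hur hxr]
  have hlin : 1 - 2 * β * (1 - b / a) = 1 + 2 * β * (b / a - 1) := by ring
  rw [hlin]
  refine ⟨one_add_mul_pos_of_neg_one_lt hp0.le hp1 hratio, ?_⟩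
  have hlog : Real.log b - Real.log a ≤ Real.log (1 + 2 * β * (b / a - 1)) / (2 * β) := by
    rw [← Real.log_div hur.ne' hxr.ne', le_div_iff₀' hp0]
    simpa only [add_sub_cancel] using mul_log_one_add_le_log_one_add_mul hp0.le hp1 hratio
  rw [one_div_mul_eq_div]
  linarith

theorem exp_concavity
    (N : ℕ)
    (r x u : Fin N → ℝ)
    (hr : ∀ i, 0 ≤ r i)
    (hx : (∀ i, 0 ≤ x i) ∧ (∑ i, x i) = 1)
    (hu : (∀ i, 0 ≤ u i) ∧ (∑ i, u i) = 1)
    (hxr : 0 < ∑ i, x i * r i) (hur : 0 < ∑ i, u i * r i)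
    (β : ℝ) (hβ0 : 0 < β) (hβ : β ≤ 1 / 2) :
    0 < 1 - 2 * β * ∑ i, (-(r i) / ∑ j, x j * r j) * (u i - x i) ∧
    -Real.log (∑ i, u i * r i)
      ≥ -Real.log (∑ i, x i * r i)
        - (1 / (2 * β))
            * Real.log (1 - 2 * β * ∑ i, (-(r i) / ∑ j, x j * r j) * (u i - x i)) :=
  exp_concavity_general r x u hxr hur β hβ0 hβ
end

section
/- Let r ∈ ℝ^N have nonnegative coordinates, let x, u ∈ Δ_N with ⟨x, r⟩ > 0 and ⟨u, r⟩ > 0, set g = −r/⟨x, r⟩, and let 0 < β ≤ 1/2. If 2β·|⟨g, u − x⟩| ≤ 1/4, then −ln⟨x, r⟩ − (−ln⟨u, r⟩) ≤ ⟨g, x − u⟩ − (β/2)·⟨g, x − u⟩². -/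
/-!
With `t = ⟨u, r⟩ / ⟨x, r⟩` one has `⟨g, x - u⟩ = t - 1`, so the inequality only involves `t`:
`log t ≤ (t - 1) - β / 2 * (t - 1) ^ 2`. The logarithm satisfies this with `1` in place of `β` when
`t ≤ 1` (Taylor expansion) and with `1 / t` in place of `β` when `1 ≤ t` (`log t ≤ sinh (log t)`),
so it holds as soon as `β ≤ 1` and `β * t ≤ 1`. The smallness assumption gives
`β * t ≤ β + β * |t - 1| ≤ 1 / 2 + 1 / 8`.
-/

theorem log_le_sub_one_sub_sq_div_two {t : ℝ} (ht : 0 < t) (ht1 : t ≤ 1) :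
    Real.log t ≤ (t - 1) - (t - 1) ^ 2 / 2 := by
  have hsum : HasSum (fun n : ℕ ↦ (1 - t) ^ (n + 1) / (n + 1)) (-Real.log t) := by
    simpa using Real.hasSum_pow_div_log_of_abs_lt_one (x := 1 - t)
      (abs_lt.2 ⟨by linarith, by linarith⟩)
  have htaylor : (1 - t) + (1 - t) ^ 2 / 2 ≤ -Real.log t := by
    have hterm (n : ℕ) : 0 ≤ (1 - t) ^ (n + 1) / ((n : ℝ) + 1) :=
      div_nonneg (pow_nonneg (sub_nonneg.2 ht1) _) n.cast_add_one_pos.le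
    simpa [Finset.sum_range_succ, one_add_one_eq_two] using
      sum_le_hasSum (Finset.range 2) (fun n _ ↦ hterm n) hsum
  linarith [sub_sq_comm 1 t]

theorem log_le_sub_one_sub_sq_div_two_mul {t : ℝ} (ht : 1 ≤ t) :
    Real.log t ≤ (t - 1) - (t - 1) ^ 2 / (2 * t) := by
  have ht0 : 0 < t := by linarith
  calc Real.log t ≤ Real.sinh (Real.log t) := Real.self_le_sinh_iff.2 (Real.log_nonneg ht)
    _ = (t - t⁻¹) / 2 := Real.sinh_log ht0
    _ = (t - 1) - (t - 1) ^ 2 / (2 * t) := by field_simp; ring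

theorem log_le_sub_one_sub_mul_sq {t β : ℝ} (ht : 0 < t) (hβ : β ≤ 1) (hβt : β * t ≤ 1) :
    Real.log t ≤ (t - 1) - β / 2 * (t - 1) ^ 2 := by
  rcases le_total t 1 with ht1 | ht1
  · calc Real.log t ≤ (t - 1) - (t - 1) ^ 2 / 2 := log_le_sub_one_sub_sq_div_two ht ht1
      _ = (t - 1) - 1 / 2 * (t - 1) ^ 2 := by ring
      _ ≤ (t - 1) - β / 2 * (t - 1) ^ 2 := by gcongr
  · have hβ_le : β ≤ 1 / t := (le_div_iff₀ ht).2 hβt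
    calc Real.log t ≤ (t - 1) - (t - 1) ^ 2 / (2 * t) := log_le_sub_one_sub_sq_div_two_mul ht1
      _ = (t - 1) - 1 / t / 2 * (t - 1) ^ 2 := by ring
      _ ≤ (t - 1) - β / 2 * (t - 1) ^ 2 := by gcongr

theorem sum_neg_div_mul_sub {ι K : Type*} [Field K] (s : Finset ι) (r v w : ι → K) (c : K) :
    ∑ i ∈ s, -(r i) / c * (v i - w i) = (∑ i ∈ s, w i * r i - ∑ i ∈ s, v i * r i) / c := by
  rw [← Finset.sum_sub_distrib, Finset.sum_div]
  exact Finset.sum_congr rfl fun i _ ↦ by ring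

theorem per_round_inequality_general {ι : Type*} [Fintype ι] (r x u : ι → ℝ)
    (hxr : 0 < ∑ i, x i * r i) (hur : 0 < ∑ i, u i * r i) (β : ℝ)
    (hβ : β ≤ 1) (hβu : β * (1 - ∑ i, (-(r i) / ∑ j, x j * r j) * (u i - x i)) ≤ 1) :
    -Real.log (∑ i, x i * r i) - (-Real.log (∑ i, u i * r i))
      ≤ (∑ i, (-(r i) / ∑ j, x j * r j) * (x i - u i))
        - β / 2 * (∑ i, (-(r i) / ∑ j, x j * r j) * (x i - u i)) ^ 2 := by
  simp only [sum_neg_div_mul_sub, sub_div, div_self hxr.ne', sub_sub_cancel] at hβu ⊢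
  have hlog := log_le_sub_one_sub_mul_sq (div_pos hur hxr) hβ hβu
  rw [Real.log_div hur.ne' hxr.ne'] at hlog
  linarith

/- STATEMENT 14: the per-round inequality f(x) - f(u) ≤ ⟨g, x-u⟩ - (β/2)⟨g, x-u⟩²
   for f(x) = -ln⟨x, r⟩ and g = -r/⟨x, r⟩, under 2β|⟨g, u-x⟩| ≤ 1/4. -/

theorem per_round_inequality
    (N : ℕ)
    (r x u : Fin N → ℝ)
    (hr : ∀ i, 0 ≤ r i)
    (hx : (∀ i, 0 ≤ x i) ∧ (∑ i, x i) = 1)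
    (hu : (∀ i, 0 ≤ u i) ∧ (∑ i, u i) = 1)
    (hxr : 0 < ∑ i, x i * r i) (hur : 0 < ∑ i, u i * r i)
    (β : ℝ) (hβ0 : 0 < β) (hβ : β ≤ 1 / 2)
    (hsmall : 2 * β * |∑ i, (-(r i) / ∑ j, x j * r j) * (u i - x i)| ≤ 1 / 4) :
    -Real.log (∑ i, x i * r i) - (-Real.log (∑ i, u i * r i))
      ≤ (∑ i, (-(r i) / ∑ j, x j * r j) * (x i - u i))
        - β / 2 * (∑ i, (-(r i) / ∑ j, x j * r j) * (x i - u i)) ^ 2 := by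
  have hβ_mul := mul_le_mul_of_nonneg_left
    (neg_le_abs (∑ i, (-(r i) / ∑ j, x j * r j) * (u i - x i))) hβ0.le
  exact per_round_inequality_general r x u hxr hur β (by linarith) (by linarith)
end

section
/- For every C > 0 there exists C' > 0 depending only on C such that the following holds. Let N, T be integers with T > N ≥ 2, let x_1, …, x_T ∈ Δ̄_N, let u ∈ Δ̄_N, let each r_t ∈ ℝ^N have nonnegative entries with r_t ≠ 0, set ∇_t = −r_t/⟨x_t, r_t⟩ and α_T(u) = min{1/2, min_{s∈[T]} 1/(8·|⟨∇_s, u − x_s⟩|)}, and set η = 1/(1024·N·(ln T)²). If a real number R satisfies R ≤ C·N·ln T/η + 16·N·ln T/α_T(u) − (1/(8·η·ln T))·Σ_{i=1}^N max_{t∈[T]} u_i/x_{t,i}, then R ≤ C'·N²·(ln T)³. -/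
/-
Write `S = ∑ i, max_t u i / x t i`. Since `∇_t = -r_t / ⟨x_t, r_t⟩` satisfies
`⟨∇_t, u - x_t⟩ = 1 - ⟨u, r_t⟩ / ⟨x_t, r_t⟩` and `u ≤ S • x_t` coordinatewise, every
`|⟨∇_t, u - x_t⟩|` is at most `S + 1`, so `1 / α_T(u) ≤ 8 (S + 1)`. The positive term is thus at
most `128 N ln T · (S + 1)`, and the choice of `η` makes the barrier term at least `128 N ln T · S`.
What is left over is `128 N ln T`, of lower order than `C N ln T / η = 1024 C N² (ln T)³`.
-/

section LogLoss

open Matrix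

variable {ι κ : Type*} [Fintype ι]

/-- The gradient `∇ = -r / ⟨x, r⟩` at `x` of the logarithmic loss `y ↦ -ln ⟨y, r⟩` of a portfolio
against the price relatives `r`. -/
noncomputable def logLossGrad (x r : ι → ℝ) : ι → ℝ :=
  fun i => -(r i) / (x ⬝ᵥ r)

/-- The rate `α(u) = min {1/2, min_t 1 / (8 |⟨∇_t, u - x_t⟩|)}` over the rounds `t ∈ s`. A round
with `⟨∇_t, u - x_t⟩ = 0` contributes `1 / 0 = 0` to the minimum, not `+∞`. -/
noncomputable def curvatureRate (s : Finset κ) (hs : s.Nonempty) (x r : κ → ι → ℝ) (u : ι → ℝ) :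
    ℝ :=
  min (1 / 2) (s.inf' hs fun t => 1 / (8 * |logLossGrad (x t) (r t) ⬝ᵥ (u - x t)|))

/-- The barrier quantity `∑ i, max_{t ∈ s} u i / x t i`. A real `⨆ t ∈ s` also ranges over the value
`sSup ∅ = 0` at each `t ∉ s`, so it is the maximum only when some ratio is nonnegative. -/
noncomputable def sumMaxRatio (s : Finset κ) (x : κ → ι → ℝ) (u : ι → ℝ) : ℝ :=
  ∑ i, ⨆ t ∈ s, u i / x t i

lemma dotProduct_pos_of_pos_of_nonneg {R : Type*} [Semiring R] [PartialOrder R]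
    [IsStrictOrderedRing R] {x r : ι → R} (hx : ∀ i, 0 < x i) (hr : ∀ i, 0 ≤ r i) (hr0 : r ≠ 0) :
    0 < x ⬝ᵥ r := by
  obtain ⟨k, hk⟩ := Function.ne_iff.mp hr0
  exact Finset.sum_pos' (fun i _ => mul_nonneg (hx i).le (hr i))
    ⟨k, Finset.mem_univ k, mul_pos (hx k) ((hr k).lt_of_ne' hk)⟩

lemma logLossGrad_dotProduct_sub {x r : ι → ℝ} (u : ι → ℝ) (h : x ⬝ᵥ r ≠ 0) :
    logLossGrad x r ⬝ᵥ (u - x) = 1 - u ⬝ᵥ r / (x ⬝ᵥ r) := by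
  have hgrad : logLossGrad x r = -((x ⬝ᵥ r)⁻¹ • r) := by
    ext i
    simp only [logLossGrad, Pi.neg_apply, Pi.smul_apply, smul_eq_mul]
    ring
  rw [hgrad, neg_dotProduct, smul_dotProduct, dotProduct_sub, dotProduct_comm r u,
    dotProduct_comm r x, smul_eq_mul]
  field_simp
  ring

lemma abs_logLossGrad_dotProduct_sub_le {x u r : ι → ℝ} {S : ℝ} (hxr : 0 < x ⬝ᵥ r) (hu : 0 ≤ u)
    (hr : 0 ≤ r) (hS : u ≤ S • x) : |logLossGrad x r ⬝ᵥ (u - x)| ≤ S + 1 := by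
  have hq_nonneg : 0 ≤ u ⬝ᵥ r / (x ⬝ᵥ r) := div_nonneg (dotProduct_nonneg_of_nonneg hu hr) hxr.le
  have hq_le : u ⬝ᵥ r / (x ⬝ᵥ r) ≤ S := by
    rw [div_le_iff₀ hxr, ← smul_eq_mul, ← smul_dotProduct]
    exact dotProduct_le_dotProduct_of_nonneg_right hS hr
  rw [logLossGrad_dotProduct_sub u hxr.ne', abs_le]
  constructor <;> linarith

lemma one_div_curvatureRate_le {s : Finset κ} (hs : s.Nonempty) {x r : κ → ι → ℝ} {u : ι → ℝ}
    {B : ℝ} (hB : ∀ t ∈ s, |logLossGrad (x t) (r t) ⬝ᵥ (u - x t)| ≤ B) :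
    1 / curvatureRate s hs x r u ≤ max 2 (8 * B) := by
  obtain ⟨t, ht, hmin⟩ :=
    s.exists_mem_eq_inf' hs fun t => 1 / (8 * |logLossGrad (x t) (r t) ⬝ᵥ (u - x t)|)
  rw [curvatureRate, hmin]
  rcases min_choice (1 / 2) (1 / (8 * |logLossGrad (x t) (r t) ⬝ᵥ (u - x t)|)) with h | h <;>
    rw [h, one_div_one_div]
  · exact le_max_left _ _
  · exact le_max_of_le_right (mul_le_mul_of_nonneg_left (hB t ht) (by norm_num))

lemma le_biSup_finset_of_sSup_empty_le {α : Type*} [ConditionallyCompleteLinearOrder α]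
    {s : Finset κ} {f : κ → α} {a : κ} (ha : a ∈ s) (hfa : sSup ∅ ≤ f a) : f a ≤ ⨆ b ∈ s, f b := by
  have hmem : f a ∈ s.image f := Finset.mem_image_of_mem f ha
  rw [Finset.ciSup_eq_max'_image f ⟨a, ha, hfa⟩ ⟨_, hmem⟩]
  exact Finset.le_max' _ _ hmem

lemma biSup_finset_nonneg {s : Finset κ} {f : κ → ℝ} (hf : ∀ a ∈ s, 0 ≤ f a) :
    0 ≤ ⨆ a ∈ s, f a :=
  Real.iSup_nonneg fun a => Real.iSup_nonneg fun ha => hf a ha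

section Barrier

variable {s : Finset κ} {x r : κ → ι → ℝ} {u : ι → ℝ}

lemma sumMaxRatio_nonneg (hx : ∀ t ∈ s, ∀ i, 0 < x t i) (hu : ∀ i, 0 ≤ u i) :
    0 ≤ sumMaxRatio s x u :=
  Finset.sum_nonneg fun i _ => biSup_finset_nonneg fun t ht => div_nonneg (hu i) (hx t ht i).le

lemma le_sumMaxRatio_smul (hx : ∀ t ∈ s, ∀ i, 0 < x t i) (hu : ∀ i, 0 ≤ u i) {t : κ}
    (ht : t ∈ s) : u ≤ sumMaxRatio s x u • x t := by
  intro i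
  have hratio_nonneg : ∀ j, ∀ t ∈ s, 0 ≤ u j / x t j := fun j t ht =>
    div_nonneg (hu j) (hx t ht j).le
  refine (div_le_iff₀ (hx t ht i)).mp ?_
  calc u i / x t i
      ≤ ⨆ t ∈ s, u i / x t i :=
        le_biSup_finset_of_sSup_empty_le (f := fun t => u i / x t i) ht
          (Real.sSup_empty.trans_le (hratio_nonneg i t ht))
    _ ≤ sumMaxRatio s x u :=
        Finset.single_le_sum (f := fun i => ⨆ t ∈ s, u i / x t i)
          (fun j _ => biSup_finset_nonneg (hratio_nonneg j)) (Finset.mem_univ i)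

lemma one_div_curvatureRate_le_sumMaxRatio (hs : s.Nonempty) (hx : ∀ t ∈ s, ∀ i, 0 < x t i)
    (hu : ∀ i, 0 ≤ u i) (hr : ∀ t ∈ s, (∀ i, 0 ≤ r t i) ∧ r t ≠ 0) :
    1 / curvatureRate s hs x r u ≤ 8 * (sumMaxRatio s x u + 1) := by
  have hgrad : ∀ t ∈ s, |logLossGrad (x t) (r t) ⬝ᵥ (u - x t)| ≤ sumMaxRatio s x u + 1 :=
    fun t ht => abs_logLossGrad_dotProduct_sub_le
      (dotProduct_pos_of_pos_of_nonneg (hx t ht) (hr t ht).1 (hr t ht).2) hu (hr t ht).1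
      (le_sumMaxRatio_smul hx hu ht)
  have hS := sumMaxRatio_nonneg hx hu
  exact (one_div_curvatureRate_le hs hgrad).trans (max_le (by linarith) le_rfl)

lemma div_curvatureRate_sub_barrier_le {N L η : ℝ} (hN : 0 ≤ N) (hL : 0 < L) (hη : 0 < η)
    (hη_le : 1024 * N * L ^ 2 * η ≤ 1) (hs : s.Nonempty) (hx : ∀ t ∈ s, ∀ i, 0 < x t i)
    (hu : ∀ i, 0 ≤ u i) (hr : ∀ t ∈ s, (∀ i, 0 ≤ r t i) ∧ r t ≠ 0) :
    16 * N * L / curvatureRate s hs x r u - 1 / (8 * η * L) * sumMaxRatio s x u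
      ≤ 128 * N * L := by
  have hpos_term : 16 * N * L / curvatureRate s hs x r u
      ≤ 16 * N * L * (8 * (sumMaxRatio s x u + 1)) := by
    rw [div_eq_mul_one_div]
    exact mul_le_mul_of_nonneg_left (one_div_curvatureRate_le_sumMaxRatio hs hx hu hr)
      (by positivity)
  have hcoeff : 128 * N * L ≤ 1 / (8 * η * L) := by
    rw [le_div_iff₀ (by positivity)]
    linarith
  have hneg_term : 128 * N * L * sumMaxRatio s x u ≤ 1 / (8 * η * L) * sumMaxRatio s x u :=
    mul_le_mul_of_nonneg_right hcoeff (sumMaxRatio_nonneg hx hu)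
  linarith

end Barrier

end LogLoss

theorem cancellation_computation_general (C : ℝ) {N T : ℕ} (hT : 2 ≤ T) {x r : ℕ → Fin N → ℝ}
    {u : Fin N → ℝ} (hx : ∀ t ∈ Finset.Icc 1 T, ∀ i, 0 < x t i) (hu : ∀ i, 0 ≤ u i)
    (hr : ∀ t ∈ Finset.Icc 1 T, (∀ i, 0 ≤ r t i) ∧ r t ≠ 0) :
    C * N * Real.log T / (1 / (1024 * N * (Real.log T) ^ 2))
        + 16 * N * Real.log T /
            curvatureRate (Finset.Icc 1 T) (Finset.nonempty_Icc.mpr (by omega)) x r u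
        - (1 / (8 * (1 / (1024 * N * (Real.log T) ^ 2)) * Real.log T))
            * sumMaxRatio (Finset.Icc 1 T) x u
      ≤ (1024 * C + 512) * N ^ 2 * (Real.log T) ^ 3 := by
  have hs : (Finset.Icc 1 T).Nonempty := Finset.nonempty_Icc.mpr (by omega)
  have hN : (1 : ℝ) ≤ N := by
    obtain ⟨i, -⟩ := Function.ne_iff.mp (hr 1 (Finset.left_mem_Icc.mpr (by omega))).2
    exact_mod_cast i.pos
  have hlog : 1 / 2 ≤ Real.log T := by
    have := Real.log_le_log two_pos (by exact_mod_cast hT : (2 : ℝ) ≤ T)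
    linarith [Real.log_two_gt_d9]
  generalize Real.log T = L at hlog ⊢
  have hL : 0 < L := by linarith
  have hcancel := div_curvatureRate_sub_barrier_le (η := 1 / (1024 * N * L ^ 2)) (by positivity) hL
    (by positivity) (mul_one_div_cancel (by positivity)).le hs hx hu hr
  have hleading_term : C * N * L / (1 / (1024 * N * L ^ 2)) = 1024 * C * N ^ 2 * L ^ 3 := by
    field_simp
  have hlower_order : 128 * N * L ≤ 512 * N ^ 2 * L ^ 3 :=
    calc 128 * N * L = 128 * N * L * (1 * (4 * (1 / 2) ^ 2)) := by ring
      _ ≤ 128 * N * L * (N * (4 * L ^ 2)) := by gcongr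
      _ = 512 * N ^ 2 * L ^ 3 := by ring
  rw [hleading_term]
  linarith

theorem cancellation_computation :
    ∀ C : ℝ, 0 < C → ∃ C' : ℝ, 0 < C' ∧
      ∀ (N T : ℕ) (_hN : 2 ≤ N) (hT : N < T)
        (x : ℕ → Fin N → ℝ) (u : Fin N → ℝ) (r : ℕ → Fin N → ℝ),
        (∀ t ∈ Finset.Icc 1 T,
            (∀ i, 0 ≤ x t i) ∧ (∑ i, x t i) = 1 ∧ ∀ i, 1 / ((N : ℝ) * T) ≤ x t i) →
        ((∀ i, 0 ≤ u i) ∧ (∑ i, u i) = 1 ∧ ∀ i, 1 / ((N : ℝ) * T) ≤ u i) →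
        (∀ t ∈ Finset.Icc 1 T, (∀ i, 0 ≤ r t i) ∧ r t ≠ 0) →
        ∀ R : ℝ,
          R ≤ C * N * Real.log T / (1 / (1024 * N * (Real.log T) ^ 2))
              + 16 * N * Real.log T /
                  min (1 / 2 : ℝ)
                    ((Finset.Icc 1 T).inf' ⟨1, Finset.mem_Icc.mpr ⟨le_rfl, by omega⟩⟩
                      fun s => 1 /
                        (8 * |∑ i, (-(r s i) / ∑ j, x s j * r s j) * (u i - x s i)|))
              - (1 / (8 * (1 / (1024 * N * (Real.log T) ^ 2)) * Real.log T))
                  * ∑ i, ⨆ t ∈ Finset.Icc 1 T, u i / x t i →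
          R ≤ C' * N ^ 2 * (Real.log T) ^ 3 := by
  intro C hC
  refine ⟨1024 * C + 512, by positivity, fun N T hN hT x u r hx hu hr R hR => hR.trans
    (cancellation_computation_general C (by omega) (fun t ht i => ?_) hu.1 hr)⟩
  have hNT : 0 < N ∧ 0 < T := by omega
  exact (one_div_pos.mpr (by exact_mod_cast Nat.mul_pos hNT.1 hNT.2)).trans_le ((hx t ht).2.2 i)
end
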